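/- Consider the closed ladder of length N (N ≥ 2) with all couplings J_{(ij)} nonzero, a Majorana family (b_k^x, b_k^y, b_k^z, c_k) indexed by the vertices, the fermionic ladder Hamiltonian H̃, and γ_k^5 = b_k^x b_k^y b_k^z c_k. Fix a vertex j. Then there is no operator Q of the form Q = λ·M, where λ is a nonzero complex number and M is a product of distinct members of the family {b_k^x, b_k^y, b_k^z, c_k : k = 1,…,4N}, such that Q anticommutes with γ_j^5, commutes with γ_k^5 for every k ≠ j, and commutes with H̃. -/

import Mathlib

noncomputable section
open scoped Classical

/-- A Majorana family indexed by `S`: self-adjoint operators on a nonzero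
finite-dimensional complex Hilbert space satisfying the Clifford relations
`cᵢcⱼ + cⱼcᵢ = 2δᵢⱼ·I`. -/
def IsMajoranaFamily {V : Type*} [NormedAddCommGroup V] [InnerProductSpace ℂ V]
    [FiniteDimensional ℂ V] {S : Type*} (c : S → (V →ₗ[ℂ] V)) : Prop :=
  (∀ i, IsSelfAdjoint (c i)) ∧
    ∀ i j, c i * c j + c j * c i = if i = j then (2 : ℂ) • (1 : V →ₗ[ℂ] V) else 0

/-- The least real eigenvalue of an endomorphism. -/
def leastEig {W : Type*} [AddCommGroup W] [Module ℂ W] (H : W →ₗ[ℂ] W) : ℝ :=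
  sInf {t : ℝ | Module.End.HasEigenvalue H (t : ℂ)}

/-- Two operators anticommute. -/
def AntiCommute {A : Type*} [Ring A] (a b : A) : Prop := a * b = -(b * a)

/-- The three bond types of the ladder. -/
inductive BondType : Type
  | x | y | z
  deriving DecidableEq

/-- Bonds of the open ladder of length `N`, with vertices `0, …, 4N-1` (these are the
1-based labels `1, …, 4N` of the paper shifted by one): type-z bonds `(2j, 2j+1)` for
`j = 0, …, 2N-1`; type-x bonds `(2j+1, 2j+2)` and type-y bonds `(2j, 2j+3)` for
`j = 0, …, 2N-2`. -/
def openBonds (N : ℕ) : List (ℕ × ℕ × BondType) :=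
  ((List.range (2 * N)).map fun j => (2 * j, 2 * j + 1, BondType.z)) ++
    ((List.range (2 * N - 1)).map fun j => (2 * j + 1, 2 * j + 2, BondType.x)) ++
    ((List.range (2 * N - 1)).map fun j => (2 * j, 2 * j + 3, BondType.y))

/-- Bonds of the closed ladder: the open ladder together with the closing
type-x bond `(4N-1, 0)` and the closing type-y bond `(4N-2, 1)`. -/
def closedBonds (N : ℕ) : List (ℕ × ℕ × BondType) :=
  openBonds N ++ [(4 * N - 1, 0, BondType.x), (4 * N - 2, 1, BondType.y)]

/-- The `16N` Majorana generators `b_k^α` and `c_k` of the fermionic ladder, indexed by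
a vertex `k` together with `some α` (giving `b_k^α`) or `none` (giving `c_k`). -/
def ladderGen {A : Type*} (b : ℕ → BondType → A) (c : ℕ → A) :
    ℕ × Option BondType → A
  | (k, none) => c k
  | (k, some α) => b k α

/-- The `16N` operators `b_k^α, c_k` (`k < 4N`) form a Majorana family. -/
def IsLadderMajorana {V : Type*} [NormedAddCommGroup V] [InnerProductSpace ℂ V]
    [FiniteDimensional ℂ V] (N : ℕ) (b : ℕ → BondType → (V →ₗ[ℂ] V))
    (c : ℕ → (V →ₗ[ℂ] V)) : Prop :=
  IsMajoranaFamily fun p : Fin (4 * N) × Option BondType => ladderGen b c ((p.1 : ℕ), p.2)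

section LadderOps

variable {A : Type*} [Ring A] [Algebra ℂ A]

/-- The bond operator `u_{ij} = i b_i^t b_j^t` of the bond `e = (i, j, t)`. -/
def uOp (b : ℕ → BondType → A) (e : ℕ × ℕ × BondType) : A :=
  Complex.I • (b e.1 e.2.2 * b e.2.1 e.2.2)

/-- The spin representative `σ̃_m^α = i b_m^α c_m`. -/
def sigmaOp (b : ℕ → BondType → A) (c : ℕ → A) (m : ℕ) (α : BondType) : A :=
  Complex.I • (b m α * c m)

/-- `γ_k^5 = b_k^x b_k^y b_k^z c_k`. -/
def gamma5 (b : ℕ → BondType → A) (c : ℕ → A) (k : ℕ) : A :=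
  b k BondType.x * b k BondType.y * b k BondType.z * c k

/-- The term `⟨ij⟩ = J_{(ij)} u_{ij} i c_i c_j` of the fermionic ladder Hamiltonian
on the bond `e = (i, j, t)`. -/
def bondTerm (J : ℕ × ℕ → ℝ) (b : ℕ → BondType → A) (c : ℕ → A)
    (e : ℕ × ℕ × BondType) : A :=
  (J (e.1, e.2.1) : ℂ) • (uOp b e * (Complex.I • (c e.1 * c e.2.1)))

/-- The fermionic ladder Hamiltonian `H̃ = Σ_{(ij)} J_{(ij)} u_{ij} i c_i c_j`,
each bond counted once. -/
def fermH (J : ℕ × ℕ → ℝ) (b : ℕ → BondType → A) (c : ℕ → A)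
    (bonds : List (ℕ × ℕ × BondType)) : A :=
  (bonds.map (bondTerm J b c)).sum

end LadderOps

/-- A (cyclic) loop: a length `len`, the vertex `v k` at cyclic position `k < len`, and
the type `t k` of the bond joining `v k` to `v ((k+1) % len)`. -/
structure Loop where
  len : ℕ
  v : ℕ → ℕ
  t : ℕ → BondType

/-- `L` is a loop of the lattice with bond list `bonds`: its vertices are distinct and
consecutive vertices are joined by a bond of `bonds` (traversed in either direction)
of the indicated type. -/
def Loop.IsLoopOf (L : Loop) (bonds : List (ℕ × ℕ × BondType)) : Prop :=
  3 ≤ L.len ∧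
    (∀ k < L.len, ∀ k' < L.len, L.v k = L.v k' → k = k') ∧
    ∀ k < L.len,
      (L.v k, L.v ((k + 1) % L.len), L.t k) ∈ bonds ∨
        (L.v ((k + 1) % L.len), L.v k, L.t k) ∈ bonds

/-- The fermionic vortex operator `B̃(C) = -u_{i₁i₂} u_{i₂i₃} ⋯ u_{i_ℓ i₁}` of a loop
(an ordered product around the loop). -/
def vortexOp {A : Type*} [Ring A] [Algebra ℂ A] (b : ℕ → BondType → A) (L : Loop) : A :=
  -((List.range L.len).map fun k => uOp b (L.v k, L.v ((k + 1) % L.len), L.t k)).prod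

/-!
A monomial `M` in the generators commutes or anticommutes with every generator, hence with every
other monomial. If `M` commutes with `H̃`, it commutes with each bond term: the generator `b_i^t`
of a bond `(i, j, t)` anticommutes with the term of that bond and commutes with all the others, so
its commutator with `H̃` isolates this term. Now multiply the signs of `M` against all bond terms.
Each `b_k^t` occurs in exactly one bond term and each `c_k` in three, which has the same parity as
one, so the result is the product of the signs of `M` against all the `γ_k^5`. Hence `M`
anticommutes with an even number of the `γ_k^5`, never with exactly one.
-/

section SignCommute

variable {A : Type*} [Ring A] {s t : ℤˣ} {a b c : A}

/-- `a` and `b` commute up to the sign `s`: they commute for `s = 1` and anticommute for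
`s = -1`. -/
def SignCommute (s : ℤˣ) (a b : A) : Prop := a * b = s • (b * a)

theorem signCommute_one_iff : SignCommute 1 a b ↔ Commute a b := by
  simp [SignCommute, commute_iff_eq]

theorem signCommute_neg_one_iff : SignCommute (-1) a b ↔ AntiCommute a b := by
  simp [SignCommute, AntiCommute]

namespace SignCommute

theorem mul_right (hb : SignCommute s a b) (hc : SignCommute t a c) :
    SignCommute (s * t) a (b * c) := by
  unfold SignCommute at *
  rw [← mul_assoc, hb, smul_mul_assoc, mul_assoc b a c, hc, mul_smul_comm, smul_smul, mul_assoc]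

theorem mul_left (ha : SignCommute s a c) (hb : SignCommute t b c) :
    SignCommute (s * t) (a * b) c := by
  unfold SignCommute at *
  rw [mul_assoc, hb, mul_smul_comm, ← mul_assoc, ha, smul_mul_assoc, smul_smul, mul_comm t,
    mul_assoc]

theorem sub_right (hb : SignCommute s a b) (hc : SignCommute s a c) :
    SignCommute s a (b - c) := by
  unfold SignCommute at *
  rw [mul_sub, hb, hc, sub_mul, smul_sub]

theorem list_prod_right {ι : Type*} {l : List ι} {s : ι → ℤˣ} {x : ι → A}
    (h : ∀ i ∈ l, SignCommute (s i) a (x i)) :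
    SignCommute (l.map s).prod a (l.map x).prod := by
  induction l with
  | nil => simp [signCommute_one_iff]
  | cons i l ih =>
    simp only [List.map_cons, List.prod_cons, List.forall_mem_cons] at h ⊢
    exact h.1.mul_right (ih h.2)

theorem list_prod_left {ι : Type*} {l : List ι} {s : ι → ℤˣ} {x : ι → A}
    (h : ∀ i ∈ l, SignCommute (s i) (x i) a) :
    SignCommute (l.map s).prod (l.map x).prod a := by
  induction l with
  | nil => simp [signCommute_one_iff]
  | cons i l ih =>
    simp only [List.map_cons, List.prod_cons, List.forall_mem_cons] at h ⊢
    exact h.1.mul_left (ih h.2)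

theorem smul_right {R : Type*} [CommSemiring R] [Algebra R A] (r : R) (h : SignCommute s a b) :
    SignCommute s a (r • b) := by
  unfold SignCommute at *
  rw [mul_smul_comm, h, smul_mul_assoc, smul_comm]

theorem smul_left_iff {𝕜 : Type*} [Field 𝕜] [Algebra 𝕜 A] {r : 𝕜} (hr : r ≠ 0) :
    SignCommute s (r • a) b ↔ SignCommute s a b := by
  simp only [SignCommute, smul_mul_assoc, mul_smul_comm, smul_comm s r]
  exact (isUnit_iff_ne_zero.2 hr).smul_left_cancel

theorem smul_right_iff {𝕜 : Type*} [Field 𝕜] [Algebra 𝕜 A] {r : 𝕜} (hr : r ≠ 0) :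
    SignCommute s a (r • b) ↔ SignCommute s a b := by
  simp only [SignCommute, smul_mul_assoc, mul_smul_comm, smul_comm s r]
  exact (isUnit_iff_ne_zero.2 hr).smul_left_cancel

theorem sign_unique [Nontrivial A] [IsAddTorsionFree A] (ha : IsUnit a) (hb : IsUnit b)
    (hs : SignCommute s a b) (ht : SignCommute t a b) : s = t := by
  have hne : b * a ≠ 0 := (hb.mul ha).ne_zero
  have hst : s • (b * a) = t • (b * a) := hs.symm.trans ht
  rcases Int.units_eq_one_or s with rfl | rfl <;> rcases Int.units_eq_one_or t with rfl | rfl <;>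
    simp_all [self_eq_neg, neg_eq_self]

end SignCommute

/-- With `H = T + R`, the commutator `P * H - H * P = 2 • (P * T)` isolates the summand `T`. -/
theorem commute_of_commute_add [IsAddTorsionFree A] {Q P T R : A} (hP : IsUnit P)
    (hPT : AntiCommute P T) (hPR : Commute P R) (hQP : SignCommute s Q P)
    (hQ : Commute Q (T + R)) : Commute Q T := by
  have hcomm : P * (T + R) - (T + R) * P = 2 • (P * T) := by
    rw [mul_add, add_mul, hPR.eq, hPT, add_sub_add_right_eq_sub, two_nsmul]
    abel
  have hQPT : SignCommute s Q (2 • (P * T)) := by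
    rw [← signCommute_one_iff] at hQ
    rw [← hcomm]
    exact .sub_right (by simpa using hQP.mul_right hQ) (by simpa using hQ.mul_right hQP)
  replace hQPT : SignCommute s Q (P * T) := by
    refine nsmul_right_injective two_ne_zero ?_
    simpa only [SignCommute, mul_smul_comm, smul_mul_assoc, smul_comm s (2 : ℕ)] using hQPT
  have hPQT : s • (P * (Q * T)) = s • (P * (T * Q)) := by
    rw [← mul_assoc, ← smul_mul_assoc, ← hQP, mul_assoc, hQPT, mul_assoc]
  exact hP.mul_left_cancel (MulAction.injective s hPQT)

end SignCommute

section Clifford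

variable {ι A : Type*} [Ring A] {g : ι → A} {S : Set ι} {l m : List ι}

/-- The Clifford relations for the generators `g p` with `p ∈ S`, in the algebraic form
`g p * g p = 1` and `g p * g q = -(g q * g p)` for `p ≠ q`. -/
structure IsCliffordOn (g : ι → A) (S : Set ι) : Prop where
  mul_self : ∀ p ∈ S, g p * g p = 1
  antiCommute : ∀ p ∈ S, ∀ q ∈ S, p ≠ q → AntiCommute (g p) (g q)

namespace IsCliffordOn

theorem isUnit (hg : IsCliffordOn g S) {p : ι} (hp : p ∈ S) : IsUnit (g p) :=
  .of_pow_eq_one ((pow_two _).trans (hg.mul_self p hp)) two_ne_zero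

theorem isUnit_prod (hg : IsCliffordOn g S) (hl : ∀ p ∈ l, p ∈ S) : IsUnit (l.map g).prod :=
  List.prod_isUnit (List.forall_mem_map.2 fun p hp => hg.isUnit (hl p hp))

end IsCliffordOn

variable [DecidableEq ι]

/-- The sign picked up when the ordered product of the Clifford generators indexed by `l` is moved
past the one indexed by `m`: a factor `-1` for each pair of distinct generators. -/
def monomialSign (l m : List ι) : ℤˣ :=
  (m.map fun q => (l.map fun p => if p = q then 1 else -1).prod).prod

theorem monomialSign_singleton_of_notMem {q : ι} (hq : q ∉ m) :
    monomialSign [q] m = (-1) ^ m.length := by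
  have hsign : ∀ p ∈ m, (if q = p then 1 else -1 : ℤˣ) = -1 := fun p hp =>
    if_neg fun hqp => hq (by rwa [hqp])
  simp [monomialSign, List.map_congr_left hsign]

namespace IsCliffordOn

theorem signCommute (hg : IsCliffordOn g S) {p q : ι} (hp : p ∈ S) (hq : q ∈ S) :
    SignCommute (if p = q then 1 else -1) (g p) (g q) := by
  split_ifs with hpq
  · rw [hpq, signCommute_one_iff]
  · exact signCommute_neg_one_iff.2 (hg.antiCommute p hp q hq hpq)

theorem signCommute_prod (hg : IsCliffordOn g S) (hl : ∀ p ∈ l, p ∈ S) (hm : ∀ q ∈ m, q ∈ S) :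
    SignCommute (monomialSign l m) (l.map g).prod (m.map g).prod :=
  .list_prod_right fun _ hq => .list_prod_left fun _ hp => hg.signCommute (hl _ hp) (hm _ hq)

theorem monomialSign_eq [Nontrivial A] [IsAddTorsionFree A] (hg : IsCliffordOn g S)
    (hl : ∀ p ∈ l, p ∈ S) (hm : ∀ q ∈ m, q ∈ S) {s : ℤˣ}
    (h : SignCommute s (l.map g).prod (m.map g).prod) : monomialSign l m = s :=
  (hg.signCommute_prod hl hm).sign_unique (hg.isUnit_prod hl) (hg.isUnit_prod hm) h

end IsCliffordOn

end Clifford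

section Lattice

instance : Fintype BondType := ⟨{.x, .y, .z}, by rintro (_ | _ | _) <;> simp⟩

theorem prod_bondType {M : Type*} [CommMonoid M] (F : BondType → M) :
    ∏ t, F t = F .x * F .y * F .z := by
  change ∏ t ∈ {BondType.x, .y, .z}, F t = _
  simp [mul_assoc]

/-- The incidences `(vertex, bond type)` of a bond list, two for each bond. -/
def halfEdges (bonds : List (ℕ × ℕ × BondType)) : List (ℕ × BondType) :=
  bonds.flatMap fun e => [(e.1, e.2.2), (e.2.1, e.2.2)]

/-- Every vertex of `{0, …, n - 1}` is incident with exactly one bond of each type, and no other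
vertex is incident with a bond. Lists rather than sets of incidences make this exclude both
self-loops and repeated bonds. -/
structure IsTrivalent (n : ℕ) (bonds : List (ℕ × ℕ × BondType)) : Prop where
  nodup : (halfEdges bonds).Nodup
  mem_iff : ∀ p, p ∈ halfEdges bonds ↔ p.1 < n

/-- The indices of the generators `b_i^t, b_j^t, c_i, c_j` that make up the term of the bond
`(i, j, t)`. -/
def bondSupport (e : ℕ × ℕ × BondType) : List (ℕ × Option BondType) :=
  [(e.1, some e.2.2), (e.2.1, some e.2.2), (e.1, none), (e.2.1, none)]

/-- The indices of the generators that make up `γ_k^5`. -/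
def siteSupport (k : ℕ) : List (ℕ × Option BondType) :=
  [(k, some .x), (k, some .y), (k, some .z), (k, none)]

variable {n : ℕ} {bonds : List (ℕ × ℕ × BondType)}

theorem mem_halfEdges {p : ℕ × BondType} :
    p ∈ halfEdges bonds ↔ ∃ e ∈ bonds, p = (e.1, e.2.2) ∨ p = (e.2.1, e.2.2) := by
  simp [halfEdges]

theorem length_halfEdges (bonds : List (ℕ × ℕ × BondType)) :
    (halfEdges bonds).length = 2 * bonds.length := by
  simp [halfEdges, mul_comm]

theorem monomialSign_fst_bondSupport {e : ℕ × ℕ × BondType} (he : e.1 ≠ e.2.1) :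
    monomialSign [(e.1, some e.2.2)] (bondSupport e) = -1 := by
  simp [monomialSign, bondSupport, he]

theorem prod_map_halfEdges {M : Type*} [CommMonoid M] (F : ℕ × BondType → M)
    (bonds : List (ℕ × ℕ × BondType)) :
    ((halfEdges bonds).map F).prod =
      (bonds.map fun e => F (e.1, e.2.2) * F (e.2.1, e.2.2)).prod := by
  induction bonds with
  | nil => rfl
  | cons e bonds ih =>
    rw [List.map_cons, List.prod_cons, ← ih]
    simp [halfEdges, mul_assoc]

theorem toFinset_halfEdges (hmem : ∀ p, p ∈ halfEdges bonds ↔ p.1 < n) :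
    (halfEdges bonds).toFinset = Finset.range n ×ˢ Finset.univ := by
  ext p
  simp [hmem]

namespace IsTrivalent

/-- A list of `3 * n` half-edges has no room for repetitions if it hits all `3 * n` slots. -/
theorem of_length (hlen : 2 * bonds.length = 3 * n)
    (hmem : ∀ p, p ∈ halfEdges bonds ↔ p.1 < n) : IsTrivalent n bonds where
  nodup := by
    rw [← Multiset.coe_nodup, ← Multiset.toFinset_card_eq_card_iff_nodup, Multiset.coe_card,
      length_halfEdges, hlen, List.toFinset_coe, toFinset_halfEdges hmem, Finset.card_product,
      Finset.card_range, mul_comm]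
    rfl
  mem_iff := hmem

variable {e f : ℕ × ℕ × BondType}

theorem fst_lt (h : IsTrivalent n bonds) (he : e ∈ bonds) : e.1 < n :=
  (h.mem_iff (e.1, e.2.2)).1 (mem_halfEdges.2 ⟨e, he, .inl rfl⟩)

theorem snd_lt (h : IsTrivalent n bonds) (he : e ∈ bonds) : e.2.1 < n :=
  (h.mem_iff (e.2.1, e.2.2)).1 (mem_halfEdges.2 ⟨e, he, .inr rfl⟩)

theorem fst_ne_snd (h : IsTrivalent n bonds) (he : e ∈ bonds) : e.1 ≠ e.2.1 := by
  obtain ⟨i, j, t⟩ := e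
  simpa using (List.nodup_flatMap.1 h.nodup).1 _ he

theorem bonds_nodup (h : IsTrivalent n bonds) : bonds.Nodup :=
  (List.nodup_flatMap.1 h.nodup).2.imp fun {e f} hef hne =>
    hef (a := (e.1, e.2.2)) (by simp) (by simp [hne])

theorem bondSupport_lt (h : IsTrivalent n bonds) (he : e ∈ bonds) :
    ∀ q ∈ bondSupport e, q.1 < n := by
  simp [bondSupport, h.fst_lt he, h.snd_lt he]

theorem some_fst_notMem_bondSupport (h : IsTrivalent n bonds) (he : e ∈ bonds) (hf : f ∈ bonds)
    (hne : e ≠ f) : (e.1, some e.2.2) ∉ bondSupport f := by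
  have : Std.Symm (Function.onFun List.Disjoint
      fun e : ℕ × ℕ × BondType => [(e.1, e.2.2), (e.2.1, e.2.2)]) := ⟨fun _ _ => List.Disjoint.symm⟩
  have hdisj := (List.nodup_flatMap.1 h.nodup).2.forall he hf hne
  obtain ⟨i, j, t⟩ := f
  simpa [bondSupport] using hdisj (a := (e.1, e.2.2)) (by simp)

theorem prod_bondSupport (h : IsTrivalent n bonds) (ε : ℕ × Option BondType → ℤˣ) :
    (bonds.map fun e => ((bondSupport e).map ε).prod).prod =
      ∏ k ∈ Finset.range n, ((siteSupport k).map ε).prod := by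
  calc (bonds.map fun e => ((bondSupport e).map ε).prod).prod
      = ((halfEdges bonds).map fun p => ε (p.1, some p.2) * ε (p.1, none)).prod := by
        rw [prod_map_halfEdges]
        refine congrArg List.prod (List.map_congr_left fun e _ => ?_)
        simp only [bondSupport, List.map_cons, List.map_nil, List.prod_cons, List.prod_nil]
        ac_rfl
    _ = ∏ k ∈ Finset.range n, ∏ t : BondType, ε (k, some t) * ε (k, none) := by
        rw [← List.prod_toFinset _ h.nodup, toFinset_halfEdges h.mem_iff, Finset.prod_product]
    _ = ∏ k ∈ Finset.range n, ((siteSupport k).map ε).prod := by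
        refine Finset.prod_congr rfl fun k _ => ?_
        simp only [prod_bondType, siteSupport, List.map_cons, List.map_nil, List.prod_cons,
          List.prod_nil, mul_one]
        calc ε (k, some .x) * ε (k, none) * (ε (k, some .y) * ε (k, none)) *
              (ε (k, some .z) * ε (k, none))
            = ε (k, some .x) * (ε (k, some .y) * (ε (k, some .z) * ε (k, none))) *
              (ε (k, none) * ε (k, none)) := by ac_rfl
          _ = _ := by rw [Int.units_mul_self, mul_one]

end IsTrivalent

theorem isTrivalent_closedBonds {N : ℕ} (hN : 0 < N) : IsTrivalent (4 * N) (closedBonds N) := by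
  refine .of_length (by simp [closedBonds, openBonds]; omega) fun p => ?_
  obtain ⟨k, t⟩ := p
  simp only [mem_halfEdges, closedBonds, openBonds, List.mem_append, List.mem_map, List.mem_range,
    List.mem_cons, List.not_mem_nil, or_false]
  constructor
  · rintro ⟨e, ((⟨a, ha, rfl⟩ | ⟨a, ha, rfl⟩) | ⟨a, ha, rfl⟩) | rfl | rfl, he | he⟩ <;>
      obtain ⟨rfl, -⟩ := Prod.mk.inj he <;> dsimp only <;> omega
  · intro hk
    change k < 4 * N at hk
    obtain ⟨i, rfl | rfl⟩ := Nat.even_or_odd' k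
    · cases t with
      | x =>
        rcases i with _ | i
        · exact ⟨_, .inr (.inl rfl), .inr rfl⟩
        · exact ⟨_, .inl (.inl (.inr ⟨i, by omega, rfl⟩)), .inr rfl⟩
      | y =>
        by_cases hi : i = 2 * N - 1
        · exact ⟨_, .inr (.inr rfl), .inl (by simp; omega)⟩
        · exact ⟨_, .inl (.inr ⟨i, by omega, rfl⟩), .inl rfl⟩
      | z => exact ⟨_, .inl (.inl (.inl ⟨i, by omega, rfl⟩)), .inl rfl⟩
    · cases t with
      | x =>
        by_cases hi : i = 2 * N - 1
        · exact ⟨_, .inr (.inl rfl), .inl (by simp; omega)⟩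
        · exact ⟨_, .inl (.inl (.inr ⟨i, by omega, rfl⟩)), .inl rfl⟩
      | y =>
        rcases i with _ | i
        · exact ⟨_, .inr (.inr rfl), .inr rfl⟩
        · exact ⟨_, .inl (.inr ⟨i, by omega, rfl⟩), .inr rfl⟩
      | z => exact ⟨_, .inl (.inl (.inl ⟨i, by omega, rfl⟩)), .inr rfl⟩

end Lattice

section Ladder

variable {A : Type*} [Ring A] {n N : ℕ} {bonds : List (ℕ × ℕ × BondType)}
  {J : ℕ × ℕ → ℝ} {b : ℕ → BondType → A} {c : ℕ → A} {l : List (ℕ × Option BondType)}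

theorem gamma5_eq_prod (b : ℕ → BondType → A) (c : ℕ → A) (k : ℕ) :
    gamma5 b c k = ((siteSupport k).map (ladderGen b c)).prod := by
  simp [gamma5, siteSupport, ladderGen, mul_assoc]

variable [Algebra ℂ A]

theorem bondTerm_eq_smul_prod (J : ℕ × ℕ → ℝ) (b : ℕ → BondType → A) (c : ℕ → A)
    (e : ℕ × ℕ × BondType) :
    bondTerm J b c e =
      (-J (e.1, e.2.1) : ℂ) • ((bondSupport e).map (ladderGen b c)).prod := by
  simp [bondTerm, uOp, bondSupport, ladderGen, mul_assoc, smul_smul]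

theorem IsLadderMajorana.isCliffordOn {V : Type*} [NormedAddCommGroup V] [InnerProductSpace ℂ V]
    [FiniteDimensional ℂ V] {b : ℕ → BondType → (V →ₗ[ℂ] V)} {c : ℕ → (V →ₗ[ℂ] V)}
    (h : IsLadderMajorana N b c) :
    IsCliffordOn (ladderGen b c) {p | p.1 < 4 * N} where
  mul_self p hp := by
    have hpp := h.2 (⟨p.1, hp⟩, p.2) (⟨p.1, hp⟩, p.2)
    rw [if_pos rfl, ← two_smul ℂ] at hpp
    exact smul_right_injective _ two_ne_zero hpp
  antiCommute p hp q hq hpq := by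
    have hpq' := h.2 (⟨p.1, hp⟩, p.2) (⟨q.1, hq⟩, q.2)
    rw [if_neg (by simpa [Prod.ext_iff] using hpq)] at hpq'
    exact eq_neg_of_add_eq_zero_left hpq'

/-- The generator `b_i^t` of the bond `(i, j, t)` anticommutes with the term of that bond and, as
no other bond of type `t` meets `i`, commutes with all other terms of `H̃`. -/
theorem commute_bondTerm_of_commute_fermH (hbonds : IsTrivalent n bonds)
    (hg : IsCliffordOn (ladderGen b c) {p | p.1 < n}) (hl : ∀ p ∈ l, p.1 < n)
    (hH : Commute (l.map (ladderGen b c)).prod (fermH J b c bonds)) {e : ℕ × ℕ × BondType}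
    (he : e ∈ bonds) : Commute (l.map (ladderGen b c)).prod (bondTerm J b c e) := by
  have : IsAddTorsionFree A := .of_isTorsionFree ℂ A
  let q : ℕ × Option BondType := (e.1, some e.2.2)
  have hqS : q.1 < n := hbonds.fst_lt he
  have hprobe : ∀ f ∈ bonds, SignCommute (monomialSign [q] (bondSupport f)) (ladderGen b c q)
      (bondTerm J b c f) := fun f hf => by
    rw [bondTerm_eq_smul_prod]
    simpa using (hg.signCommute_prod (l := [q]) (by simpa) (hbonds.bondSupport_lt hf)).smul_right
      (-J (f.1, f.2.1) : ℂ)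
  have hself : AntiCommute (ladderGen b c q) (bondTerm J b c e) := by
    rw [← signCommute_neg_one_iff, ← monomialSign_fst_bondSupport (hbonds.fst_ne_snd he)]
    exact hprobe e he
  have hother : ∀ f ∈ bonds.erase e, Commute (ladderGen b c q) (bondTerm J b c f) := by
    intro f hf
    obtain ⟨hfe, hf⟩ := hbonds.bonds_nodup.mem_erase_iff.1 hf
    have hq := hbonds.some_fst_notMem_bondSupport he hf hfe.symm
    have := hprobe f hf
    rwa [monomialSign_singleton_of_notMem hq, show (bondSupport f).length = 4 from rfl,
      Even.neg_one_pow (by decide), signCommute_one_iff] at this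
  have hsplit : fermH J b c bonds =
      bondTerm J b c e + ((bonds.erase e).map (bondTerm J b c)).sum := by
    simpa [fermH] using ((List.perm_cons_erase he).map (bondTerm J b c)).sum_eq
  exact commute_of_commute_add (hg.isUnit hqS) hself
    (.list_sum_right _ _ (List.forall_mem_map.2 hother))
    (by simpa using hg.signCommute_prod hl (m := [q]) (by simpa)) (hsplit ▸ hH)

theorem monomialSign_bondSupport [Nontrivial A] (hbonds : IsTrivalent n bonds)
    (hg : IsCliffordOn (ladderGen b c) {p | p.1 < n}) (hl : ∀ p ∈ l, p.1 < n)
    (hH : Commute (l.map (ladderGen b c)).prod (fermH J b c bonds)) {e : ℕ × ℕ × BondType}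
    (he : e ∈ bonds) (hJ : J (e.1, e.2.1) ≠ 0) : monomialSign l (bondSupport e) = 1 := by
  have : IsAddTorsionFree A := .of_isTorsionFree ℂ A
  have hJe : (-J (e.1, e.2.1) : ℂ) ≠ 0 := by simpa using hJ
  have hcomm := commute_bondTerm_of_commute_fermH hbonds hg hl hH he
  rw [bondTerm_eq_smul_prod, ← signCommute_one_iff, SignCommute.smul_right_iff hJe] at hcomm
  exact hg.monomialSign_eq hl (hbonds.bondSupport_lt he) hcomm

theorem prod_monomialSign_siteSupport [Nontrivial A] (hbonds : IsTrivalent n bonds)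
    (hJ : ∀ e ∈ bonds, J (e.1, e.2.1) ≠ 0)
    (hg : IsCliffordOn (ladderGen b c) {p | p.1 < n}) (hl : ∀ p ∈ l, p.1 < n)
    (hH : Commute (l.map (ladderGen b c)).prod (fermH J b c bonds)) :
    ∏ k ∈ Finset.range n, monomialSign l (siteSupport k) = 1 := by
  unfold monomialSign
  rw [← hbonds.prod_bondSupport]
  exact List.prod_eq_one (List.forall_mem_map.2 fun e he =>
    monomialSign_bondSupport hbonds hg hl hH he (hJ e he))

end Ladder

theorem no_monomial_Q_for_closed_ladder_general {A : Type*} [Ring A] [Algebra ℂ A] [Nontrivial A]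
    {n : ℕ} {bonds : List (ℕ × ℕ × BondType)} (hbonds : IsTrivalent n bonds) (J : ℕ × ℕ → ℝ)
    (hJ : ∀ e ∈ bonds, J (e.1, e.2.1) ≠ 0) (b : ℕ → BondType → A) (c : ℕ → A)
    (hg : IsCliffordOn (ladderGen b c) {p | p.1 < n}) {j : ℕ} (hj : j < n) :
    ¬∃ (lam : ℂ) (l : List (ℕ × Option BondType)),
      lam ≠ 0 ∧ (∀ p ∈ l, p.1 < n) ∧
      AntiCommute (lam • (l.map (ladderGen b c)).prod) (gamma5 b c j) ∧
      (∀ k < n, k ≠ j → Commute (lam • (l.map (ladderGen b c)).prod) (gamma5 b c k)) ∧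
      Commute (lam • (l.map (ladderGen b c)).prod) (fermH J b c bonds) := by
  rintro ⟨lam, l, hlam, hl, hj_anti, hk_comm, hH⟩
  have : IsAddTorsionFree A := .of_isTorsionFree ℂ A
  simp only [← signCommute_one_iff, ← signCommute_neg_one_iff, SignCommute.smul_left_iff hlam]
    at hj_anti hk_comm hH
  have hsite : ∀ {k s}, k < n → SignCommute s (l.map (ladderGen b c)).prod (gamma5 b c k) →
      monomialSign l (siteSupport k) = s := fun hk h =>
    hg.monomialSign_eq hl (by simpa [siteSupport]) (gamma5_eq_prod b c _ ▸ h)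
  have hprod : ∏ k ∈ Finset.range n, monomialSign l (siteSupport k) = 1 :=
    prod_monomialSign_siteSupport hbonds hJ hg hl (signCommute_one_iff.1 hH)
  rw [Finset.prod_eq_single_of_mem j (Finset.mem_range.2 hj) fun k hk hkj =>
    hsite (Finset.mem_range.1 hk) (hk_comm k (Finset.mem_range.1 hk) hkj),
    hsite hj hj_anti] at hprod
  exact absurd hprod (by decide)

/-- For the closed ladder of length `N ≥ 2` with all couplings
nonzero, a Majorana family `(b_k^x, b_k^y, b_k^z, c_k)` indexed by the vertices, the
fermionic ladder Hamiltonian `H̃` and `γ_k^5 = b_k^x b_k^y b_k^z c_k`: for any fixed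
vertex `j` there is no operator `Q = λ·M`, with `λ ≠ 0` and `M` a product of distinct
members of the family `{b_k^x, b_k^y, b_k^z, c_k}`, that anticommutes with `γ_j^5`,
commutes with `γ_k^5` for every `k ≠ j`, and commutes with `H̃`. -/
theorem no_monomial_Q_for_closed_ladder
    {V : Type*} [NormedAddCommGroup V] [InnerProductSpace ℂ V]
    [FiniteDimensional ℂ V] [Nontrivial V]
    (N : ℕ) (hN : 2 ≤ N) (J : ℕ × ℕ → ℝ)
    (hJ : ∀ e ∈ closedBonds N, J (e.1, e.2.1) ≠ 0)
    (b : ℕ → BondType → (V →ₗ[ℂ] V)) (c : ℕ → (V →ₗ[ℂ] V))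
    (hbc : IsLadderMajorana N b c)
    (j : ℕ) (hj : j < 4 * N) :
    ¬∃ (lam : ℂ) (l : List (ℕ × Option BondType)),
      lam ≠ 0 ∧ l.Nodup ∧ (∀ p ∈ l, p.1 < 4 * N) ∧
      AntiCommute (lam • (l.map (ladderGen b c)).prod) (gamma5 b c j) ∧
      (∀ k < 4 * N, k ≠ j →
        Commute (lam • (l.map (ladderGen b c)).prod) (gamma5 b c k)) ∧
      Commute (lam • (l.map (ladderGen b c)).prod) (fermH J b c (closedBonds N)) :=
  fun ⟨lam, l, hlam, _, h⟩ => no_monomial_Q_for_closed_ladder_general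
    (isTrivalent_closedBonds (by omega)) J hJ b c hbc.isCliffordOn hj ⟨lam, l, hlam, h⟩
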